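/- Let r ≥ 2 be an integer and let G be an antipodal distance-regular graph of diameter 3 on n vertices which is an antipodal r-cover and whose smallest adjacency eigenvalue equals −r − 1. Then n ≤ r⁶ + 3r⁵ + r⁴ − 4r³ − 4r². In particular, for each fixed r ≥ 2 there are only finitely many such graphs. -/

import Mathlib

open Matrix

variable {V : Type*} [Fintype V] [DecidableEq V]

/-- The distance-`i` matrix of a graph: the `(x,y)` entry is 1 if `dist x y = i`, else 0. -/
noncomputable def distM (G : SimpleGraph V) (i : ℕ) : Matrix V V ℝ :=
  Matrix.of fun x y => if G.dist x y = i then (1 : ℝ) else 0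

/-- The `q`-distance matrix `𝔻_q = ∑_{i=1}^D (1 + 1/q + ⋯ + 1/q^{i-1}) • A_i`. -/
noncomputable def qDist (G : SimpleGraph V) (D : ℕ) (q : ℝ) : Matrix V V ℝ :=
  ∑ i ∈ Finset.Icc 1 D, (∑ j ∈ Finset.range i, (1 / q) ^ j) • distM G i

/-- `G` is distance-regular with diameter `D` and intersection numbers `b i`, `c i`
(with `c 1 = 1`): for any vertices `x, y` at distance `i ≤ D`, the number of neighbors
of `y` at distance `i - 1` from `x` is `c i` and the number of neighbors of `y` at
distance `i + 1` from `x` is `b i`. -/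
def IsDRG (G : SimpleGraph V) (D : ℕ) (b c : ℕ → ℕ) : Prop :=
  G.Connected ∧
  (∀ x y : V, G.dist x y ≤ D) ∧
  (∃ x y : V, G.dist x y = D) ∧
  c 1 = 1 ∧
  ∀ i ≤ D, ∀ x y : V, G.dist x y = i →
    ({z : V | G.Adj y z ∧ G.dist x z = i - 1} : Set V).ncard = c i ∧
    ({z : V | G.Adj y z ∧ G.dist x z = i + 1} : Set V).ncard = b i

/-- `a i = k - b i - c i` as a real number, where `k = b 0`. -/
noncomputable def aInt (b c : ℕ → ℕ) (i : ℕ) : ℝ := (b 0 : ℝ) - (b i : ℝ) - (c i : ℝ)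

/-- `G` is antipodal with diameter `D`: being equal or at distance `D` is an equivalence
relation on the vertices. -/
def IsAntipodal (G : SimpleGraph V) (D : ℕ) : Prop :=
  ∀ u v w : V, G.dist u v = D → G.dist u w = D → (v = w ∨ G.dist v w = D)

/-- `G` is an antipodal `r`-cover with diameter `D`: every antipodal class has exactly `r`
elements. -/
def IsAntipodalCover (G : SimpleGraph V) (D r : ℕ) : Prop :=
  IsAntipodal G D ∧ ∀ x : V, ({y : V | y = x ∨ G.dist x y = D} : Set V).ncard = r

/-!
Let `A` be the adjacency matrix, `B` the 0/1 matrix of the antipodal partition, `J` the all-ones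
matrix and `k` the valency. Every fibre meets every closed neighbourhood exactly once, so
`(1 + A) * B = J = B * (1 + A)`. Hence an eigenvector of `A` whose eigenvalue `θ` is neither `k`
nor `-1` is killed by `B`, and the three-term recurrence then makes `θ` a root of
`x ^ 2 - (a₁ - c₂) * x - k`. If `θ'` is the other root, `(θ' - θ)⁻¹ • (A - θ) * (1 - r⁻¹ • B)` is
the projection onto the `θ'`-eigenspace, and its trace `m` is a natural number with
`m * (k + θ ^ 2) = θ ^ 2 * (r - 1) * (k + 1)`. For an integer `θ` with `θ ^ 2 > 1` this gives
`k + θ ^ 2 ∣ θ ^ 2 * (r - 1) * (θ ^ 2 - 1)`, which bounds `k` and therefore `n = r * (k + 1)`.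
-/

lemma trace_eq_rank_of_isIdempotentElem {n K : Type*} [Fintype n] [Field K] {E : Matrix n n K}
    (hE : IsIdempotentElem E) : E.trace = E.rank := by
  classical
  have hE' : IsIdempotentElem (toLin' E) := hE.map (toLinAlgEquiv' (R := K))
  rw [← trace_toLin'_eq, (LinearMap.IsIdempotentElem.isProj_range _ hE').trace]
  rfl

lemma isIdempotentElem_inv_sub_smul_mul {K R : Type*} [Field K] [Ring R] [Algebra K R] {a p : R}
    {θ θ' : K} (hθ : θ ≠ θ') (hp : IsIdempotentElem p) (hap : Commute a p)
    (h : (a - algebraMap K R θ) * (a - algebraMap K R θ') * p = 0) :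
    IsIdempotentElem ((θ' - θ)⁻¹ • ((a - algebraMap K R θ) * p)) := by
  set u := a - algebraMap K R θ with hu
  have hup : Commute u p := hap.sub_left (Algebra.commutes θ p)
  have huu : u * u * p = (θ' - θ) • (u * p) := by
    have hsub : a - algebraMap K R θ' = u - algebraMap K R (θ' - θ) := by
      rw [hu, map_sub]; abel
    rw [hsub, mul_sub, sub_mul, sub_eq_zero] at h
    rw [h, ← Algebra.commutes, mul_assoc, Algebra.smul_def]
  have hsq : u * p * (u * p) = (θ' - θ) • (u * p) := by
    rw [hup.symm.mul_mul_mul_comm, hp.eq, huu]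
  rw [IsIdempotentElem, smul_mul_smul_comm, hsq, smul_smul, mul_assoc,
    inv_mul_cancel₀ (sub_ne_zero.2 hθ.symm), mul_one]

lemma exists_mulVec_eq_smul_of_mem_spectrum {n K : Type*} [Fintype n] [DecidableEq n] [Field K]
    {A : Matrix n n K} {θ : K} (h : θ ∈ spectrum K A) : ∃ v, v ≠ 0 ∧ A *ᵥ v = θ • v := by
  rw [← spectrum_toLin', ← Module.End.hasEigenvalue_iff_mem_spectrum] at h
  obtain ⟨v, hv⟩ := h.exists_hasEigenvector
  exact ⟨v, hv.2, by simpa using hv.apply_eq_smul⟩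

section RelMatrix

variable {α : Type*} {R S : α → α → Prop}

open scoped Classical in
/-- The 0/1 matrix of a binary relation. Distance matrices and the matrix of an equivalence
relation are of this form, and the entries of a product of two such matrices are cardinalities. -/
noncomputable def relMatrix (R : α → α → Prop) : Matrix α α ℝ :=
  of fun x y => if R x y then 1 else 0

lemma relMatrix_transpose [Std.Symm R] : (relMatrix R)ᵀ = relMatrix R := by
  classical
  ext x y
  simp only [relMatrix, transpose_apply, of_apply]
  exact if_congr ⟨Std.Symm.symm _ _, Std.Symm.symm _ _⟩ rfl rfl

variable [Fintype α]

lemma relMatrix_mul_apply (x y : α) :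
    (relMatrix R * relMatrix S) x y = ({z | R x z ∧ S z y} : Set α).ncard := by
  classical
  simp [relMatrix, mul_apply, ← ite_and, Set.ncard_eq_toFinset_card', and_comm]

lemma relMatrix_mulVec_one_apply (x : α) :
    (relMatrix R *ᵥ 1) x = ({z | R x z} : Set α).ncard := by
  classical
  simp [relMatrix, mulVec, dotProduct, Set.ncard_eq_toFinset_card']

lemma relMatrix_mul_self_of_equivalence {r : ℕ} (hR : Equivalence R)
    (hr : ∀ x, ({y | R x y} : Set α).ncard = r) :
    relMatrix R * relMatrix R = (r : ℝ) • relMatrix R := by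
  ext x y
  rw [relMatrix_mul_apply]
  by_cases hxy : R x y
  · have : {z | R x z ∧ R z y} = {z | R x z} :=
      Set.ext fun z => and_iff_left_of_imp fun hxz => hR.trans (hR.symm hxz) hxy
    simp [this, hr, relMatrix, hxy]
  · have : {z | R x z ∧ R z y} = ∅ :=
      Set.eq_empty_of_forall_notMem fun z hz => hxy (hR.trans hz.1 hz.2)
    simp [this, relMatrix, hxy]

end RelMatrix

variable {α : Type*} {G : SimpleGraph α} {D r : ℕ} {b c : ℕ → ℕ}

lemma distM_eq_relMatrix (i : ℕ) : distM G i = relMatrix fun x y => G.dist x y = i := by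
  ext x y
  simp [distM, relMatrix]

lemma distM_transpose (i : ℕ) : (distM G i)ᵀ = distM G i := by
  ext x y
  simp [distM, G.dist_comm]

lemma trace_distM [Fintype α] {i : ℕ} (hi : i ≠ 0) : (distM G i).trace = 0 := by
  simp [trace, distM, hi.symm]

namespace IsDRG

lemma ncard_adj (hG : IsDRG G D b c) (x : α) : ({z | G.Adj x z} : Set α).ncard = b 0 := by
  rw [← (hG.2.2.2.2 0 D.zero_le x x G.dist_self).2]
  simp [SimpleGraph.dist_eq_one_iff_adj]

lemma distM_one_mulVec_one [Fintype α] (hG : IsDRG G D b c) : distM G 1 *ᵥ 1 = (b 0 : ℝ) • 1 := by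
  ext x
  simp [distM_eq_relMatrix, relMatrix_mulVec_one_apply, SimpleGraph.dist_eq_one_iff_adj,
    hG.ncard_adj]

lemma b_pos [Finite α] (hG : IsDRG G D b c) {i : ℕ} (hi : i < D) : 0 < b i := by
  obtain ⟨hconn, -, ⟨x, y, hxy⟩, -, hreg⟩ := hG
  obtain ⟨w, hw⟩ := hconn.exists_walk_length_eq_dist x y
  rw [hxy] at hw
  have hdist (j : ℕ) (hj : j ≤ D) : G.dist x (w.getVert j) = j := by
    have h₁ := SimpleGraph.dist_le (w.take j)
    have h₂ := SimpleGraph.dist_le (w.drop j)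
    have h₃ := hconn.dist_triangle (u := x) (v := w.getVert j) (w := y)
    rw [SimpleGraph.Walk.take_length] at h₁
    rw [SimpleGraph.Walk.drop_length] at h₂
    omega
  rw [← (hreg i hi.le x _ (hdist i hi.le)).2, Set.ncard_pos]
  exact ⟨w.getVert (i + 1), w.adj_getVert_succ (hw ▸ hi), hdist (i + 1) hi⟩

lemma ncard_adj_dist_eq [Finite α] (hG : IsDRG G D b c) {i : ℕ} {x y : α}
    (hxy : G.dist x y = i + 1) :
    (({z | G.Adj y z ∧ G.dist x z = i + 1} : Set α).ncard : ℝ) = aInt b c (i + 1) := by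
  have hpart : {z | G.Adj y z} = {z | G.Adj y z ∧ G.dist x z = i} ∪
      {z | G.Adj y z ∧ G.dist x z = i + 1} ∪ {z | G.Adj y z ∧ G.dist x z = i + 2} := by
    ext z
    have := SimpleGraph.Adj.diff_dist_adj (G := G) (u := x) (v := y) (w := z)
    simp only [Set.mem_ofPred_eq, Set.mem_union]
    grind
  have hcount := congrArg Set.ncard hpart
  obtain ⟨hc, hb⟩ := hG.2.2.2.2 (i + 1) (hxy ▸ hG.2.1 x y) x y hxy
  rw [Set.ncard_union_eq (by rw [Set.disjoint_left]; grind),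
    Set.ncard_union_eq (by rw [Set.disjoint_left]; grind), hG.ncard_adj, hb] at hcount
  rw [Nat.add_sub_cancel] at hc
  rw [hc] at hcount
  rw [aInt, hcount]
  push_cast
  ring

theorem distM_succ_mul_distM_one [Fintype α] (hG : IsDRG G D b c) (i : ℕ) :
    distM G (i + 1) * distM G 1 = (b i : ℝ) • distM G i +
      aInt b c (i + 1) • distM G (i + 1) + (c (i + 2) : ℝ) • distM G (i + 2) := by
  ext x y
  have hentry : (distM G (i + 1) * distM G 1) x y =
      ({z | G.Adj y z ∧ G.dist x z = i + 1} : Set α).ncard := by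
    simp [distM_eq_relMatrix, relMatrix_mul_apply, SimpleGraph.dist_eq_one_iff_adj, and_comm,
      G.adj_comm]
  have hreg := hG.2.2.2.2 (G.dist x y) (hG.2.1 x y) x y rfl
  rw [hentry]
  by_cases h₀ : G.dist x y = i
  · rw [h₀] at hreg
    simp [distM, h₀, hreg.2]
  by_cases h₁ : G.dist x y = i + 1
  · simp [distM, h₁, hG.ncard_adj_dist_eq h₁]
  by_cases h₂ : G.dist x y = i + 2
  · rw [h₂] at hreg
    simpa [distM, h₂] using hreg.1
  have hempty : {z | G.Adj y z ∧ G.dist x z = i + 1} = ∅ :=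
    Set.eq_empty_of_forall_notMem fun z ⟨hyz, hxz⟩ => by
      have := hyz.diff_dist_adj (u := x)
      omega
  simp [distM, h₀, h₁, h₂, hempty]

end IsDRG

/-- Two vertices are antipodally related when they are equal or at distance `D`, where `D` stands
for the diameter. The orientation of the equality matches `IsAntipodalCover`. -/
def AntipodalRel (G : SimpleGraph α) (D : ℕ) (x y : α) : Prop := y = x ∨ G.dist x y = D

lemma IsAntipodal.equivalence (h : IsAntipodal G D) : Equivalence (AntipodalRel G D) where
  refl x := .inl rfl
  symm := Or.imp Eq.symm fun hxy => G.dist_comm ▸ hxy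
  trans := by
    rintro x y z (rfl | hxy) (rfl | hyz)
    · exact .inl rfl
    · exact .inr hyz
    · exact .inr hxy
    · exact (h y x z (G.dist_comm ▸ hxy) hyz).imp_left Eq.symm

instance : Std.Symm (AntipodalRel G D) where
  symm _ _ := Or.imp Eq.symm fun hxy => G.dist_comm ▸ hxy

/-- The matrix `1 + A_D` of the partition of the vertices into antipodal classes (fibres). -/
noncomputable def fibreMatrix (G : SimpleGraph α) (D : ℕ) : Matrix α α ℝ :=
  relMatrix (AntipodalRel G D)

lemma trace_fibreMatrix [Fintype α] : (fibreMatrix G D).trace = Fintype.card α := by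
  simp [fibreMatrix, relMatrix, AntipodalRel, trace]

lemma IsAntipodalCover.fibreMatrix_mul_self [Fintype α] (h : IsAntipodalCover G D r) :
    fibreMatrix G D * fibreMatrix G D = (r : ℝ) • fibreMatrix G D :=
  relMatrix_mul_self_of_equivalence h.1.equivalence h.2

lemma IsAntipodalCover.fibreMatrix_mulVec_one [Fintype α] (h : IsAntipodalCover G D r) :
    fibreMatrix G D *ᵥ 1 = (r : ℝ) • 1 := by
  ext x
  have hx : ({y | AntipodalRel G D x y} : Set α).ncard = r := h.2 x
  simp [fibreMatrix, relMatrix_mulVec_one_apply, hx]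

lemma IsAntipodalCover.cast_ne_zero [Finite α] [Nonempty α] (h : IsAntipodalCover G D r) :
    (r : ℝ) ≠ 0 := by
  inhabit α
  rw [Nat.cast_ne_zero, ← h.2 default]
  exact Set.ncard_ne_zero_of_mem (.inl rfl)

lemma IsDRG.two_le_of_isAntipodalCover [Finite α] (hG : IsDRG G D b c) (hD : D ≠ 0)
    (h : IsAntipodalCover G D r) : 2 ≤ r := by
  obtain ⟨-, -, ⟨x, y, hxy⟩, -⟩ := hG
  rw [← h.2 x, Nat.succ_le_iff, Set.one_lt_ncard_iff]
  exact ⟨x, y, .inl rfl, .inr hxy, by rintro rfl; simp_all⟩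

namespace IsDRG

lemma existsUnique_dist_le_one_and_antipodalRel [Finite α] (hG : IsDRG G 3 b c)
    (h : IsAntipodal G 3) (x y : α) : ∃! z, G.dist x z ≤ 1 ∧ AntipodalRel G 3 z y := by
  have hex : ∃ z, G.dist x z ≤ 1 ∧ AntipodalRel G 3 z y := by
    obtain hxy | hxy | hxy : G.dist x y ≤ 1 ∨ G.dist x y = 2 ∨ G.dist x y = 3 := by
      have := hG.2.1 x y
      omega
    · exact ⟨y, hxy, .inl rfl⟩
    · have hb : 0 < b 2 := hG.b_pos (by norm_num)
      rw [← (hG.2.2.2.2 2 (by norm_num) y x (by rwa [G.dist_comm])).2, Set.ncard_pos] at hb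
      obtain ⟨z, hxz, hyz⟩ := hb
      exact ⟨z, (SimpleGraph.dist_eq_one_iff_adj.2 hxz).le, .inr (by rwa [G.dist_comm])⟩
    · exact ⟨x, by simp, .inr hxy⟩
  refine existsUnique_of_exists_of_unique hex fun z z' hz hz' => ?_
  obtain hzz' | hzz' := h.equivalence.trans hz.2 (h.equivalence.symm hz'.2)
  · exact hzz'.symm
  · have htri := hG.1.dist_triangle (u := z) (v := x) (w := z')
    rw [G.dist_comm (u := z) (v := x)] at htri
    linarith [hz.1, hz'.1]

variable [Fintype α]

lemma one_add_distM_one_mul_fibreMatrix [DecidableEq α] (hG : IsDRG G 3 b c)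
    (h : IsAntipodal G 3) :
    (1 + distM G 1) * fibreMatrix G 3 = of fun _ _ => 1 := by
  have hball : 1 + distM G 1 = relMatrix fun x y => G.dist x y ≤ 1 := by
    ext x y
    by_cases hxy : x = y
    · simp [distM, relMatrix, hxy]
    · have hpos := hG.1.pos_dist_of_ne hxy
      have hadj : G.dist x y = 1 ↔ G.dist x y ≤ 1 := by omega
      simp only [distM, relMatrix, Matrix.add_apply, one_apply_ne hxy, zero_add, of_apply]
      congr 1
      exact propext hadj
  ext x y
  obtain ⟨z, hz⟩ := hG.existsUnique_dist_le_one_and_antipodalRel h x y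
  have hsingle : {z | G.dist x z ≤ 1 ∧ AntipodalRel G 3 z y} = {z} :=
    Set.ext fun w => ⟨hz.2 w, fun hw => hw ▸ hz.1⟩
  rw [hball, fibreMatrix, relMatrix_mul_apply, hsingle]
  simp

lemma fibreMatrix_mul_one_add_distM_one [DecidableEq α] (hG : IsDRG G 3 b c)
    (h : IsAntipodal G 3) :
    fibreMatrix G 3 * (1 + distM G 1) = of fun _ _ => 1 := by
  have := congrArg transpose (hG.one_add_distM_one_mul_fibreMatrix h)
  rwa [transpose_mul, transpose_add, transpose_one, distM_transpose, fibreMatrix,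
    relMatrix_transpose] at this

lemma commute_distM_one_fibreMatrix (hG : IsDRG G 3 b c) (h : IsAntipodal G 3) :
    Commute (distM G 1) (fibreMatrix G 3) := by
  classical
  have := (hG.one_add_distM_one_mul_fibreMatrix h).trans
    (hG.fibreMatrix_mul_one_add_distM_one h).symm
  rwa [add_mul, mul_add, one_mul, mul_one, add_right_inj] at this

theorem card_eq (hG : IsDRG G 3 b c) (h : IsAntipodalCover G 3 r) :
    Fintype.card α = r * (b 0 + 1) := by
  classical
  obtain ⟨x⟩ := hG.1.nonempty
  have hsum := congrArg (fun M => (M *ᵥ 1) x) (hG.one_add_distM_one_mul_fibreMatrix h.1)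
  simp only [← mulVec_mulVec, h.fibreMatrix_mulVec_one, mulVec_smul, add_mulVec, one_mulVec,
    hG.distM_one_mulVec_one] at hsum
  simp only [Pi.smul_apply, Pi.add_apply, Pi.one_apply, smul_eq_mul, mul_one, mulVec, dotProduct,
    of_apply, Finset.sum_const, Finset.card_univ, nsmul_eq_mul] at hsum
  have : (Fintype.card α : ℝ) = r * (b 0 + 1) := by linarith
  exact_mod_cast this

lemma distM_two_eq (hG : IsDRG G 3 b c) (h : IsAntipodal G 3) :
    distM G 2 = distM G 1 * fibreMatrix G 3 - distM G 1 := by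
  classical
  have hJ := hG.one_add_distM_one_mul_fibreMatrix h
  rw [add_mul, one_mul, ← eq_sub_iff_add_eq'] at hJ
  rw [hJ]
  ext x y
  have h₀ := hG.1.dist_eq_zero_iff (u := x) (v := y)
  have h₃ := hG.2.1 x y
  simp only [distM, fibreMatrix, relMatrix, AntipodalRel, Matrix.sub_apply, of_apply,
    eq_comm (a := y), ← h₀]
  interval_cases G.dist x y <;> norm_num

lemma distM_one_mul_self [DecidableEq α] (hG : IsDRG G 3 b c) (h : IsAntipodal G 3) :
    distM G 1 * distM G 1 = (b 0 : ℝ) • 1 + (aInt b c 1 - c 2) • distM G 1 +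
      (c 2 : ℝ) • (distM G 1 * fibreMatrix G 3) := by
  have h₀ : distM G 0 = 1 := by
    ext x y
    simp [distM, hG.1.dist_eq_zero_iff, one_apply]
  rw [hG.distM_succ_mul_distM_one 0, h₀, hG.distM_two_eq h]
  module

lemma one_dotProduct_eq_zero (hG : IsDRG G D b c) {θ : ℝ} {v : α → ℝ}
    (hv : distM G 1 *ᵥ v = θ • v) (hk : θ ≠ b 0) : 1 ⬝ᵥ v = 0 := by
  have hsum : θ * (1 ⬝ᵥ v) = b 0 * (1 ⬝ᵥ v) := by
    rw [← smul_eq_mul, ← dotProduct_smul, ← hv, dotProduct_mulVec, ← mulVec_transpose,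
      distM_transpose, hG.distM_one_mulVec_one, smul_dotProduct, smul_eq_mul]
  exact (mul_eq_mul_right_iff.1 hsum).resolve_left hk

lemma fibreMatrix_mulVec_eq_zero (hG : IsDRG G 3 b c) (h : IsAntipodal G 3) {θ : ℝ} {v : α → ℝ}
    (hv : distM G 1 *ᵥ v = θ • v) (hk : θ ≠ b 0) (h₁ : θ ≠ -1) : fibreMatrix G 3 *ᵥ v = 0 := by
  classical
  have hJ : (of fun _ _ => (1 : ℝ) : Matrix α α ℝ) *ᵥ v = 0 :=
    funext fun _ => hG.one_dotProduct_eq_zero hv hk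
  have hscale : (1 + θ) • (fibreMatrix G 3 *ᵥ v) = 0 := by
    rw [← hJ, ← hG.fibreMatrix_mul_one_add_distM_one h, ← mulVec_mulVec, add_mulVec, one_mulVec,
      hv, ← mulVec_smul, add_smul, one_smul]
  exact (smul_eq_zero.1 hscale).resolve_left fun h₀ => h₁ (by linarith)

theorem sq_eq_of_mem_spectrum [DecidableEq α] (hG : IsDRG G 3 b c) (h : IsAntipodal G 3)
    {θ : ℝ} (hθ : θ ∈ spectrum ℝ (distM G 1)) (hk : θ ≠ b 0) (h₁ : θ ≠ -1) :
    θ ^ 2 = b 0 + (aInt b c 1 - c 2) * θ := by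
  obtain ⟨v, hv₀, hv⟩ := exists_mulVec_eq_smul_of_mem_spectrum hθ
  have hBv := hG.fibreMatrix_mulVec_eq_zero h hv hk h₁
  have hAA := congrArg (· *ᵥ v) (hG.distM_one_mul_self h)
  simp only [add_mulVec, smul_mulVec, one_mulVec, ← mulVec_mulVec, hv, hBv, mulVec_smul,
    mulVec_zero, smul_zero, add_zero, smul_smul, ← add_smul] at hAA
  rw [sq]
  exact smul_left_injective ℝ hv₀ hAA

lemma sub_mul_sub_mul_one_sub_fibreMatrix [DecidableEq α] (hG : IsDRG G 3 b c)
    (h : IsAntipodalCover G 3 r) {θ θ' : ℝ} (hadd : θ + θ' = aInt b c 1 - c 2)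
    (hmul : θ * θ' = -b 0) :
    (distM G 1 - algebraMap ℝ _ θ) * (distM G 1 - algebraMap ℝ _ θ') *
      (1 - (r : ℝ)⁻¹ • fibreMatrix G 3) = 0 := by
  have := hG.1.nonempty
  have hr := h.cast_ne_zero
  have hB : fibreMatrix G 3 * (1 - (r : ℝ)⁻¹ • fibreMatrix G 3) = 0 := by
    rw [mul_sub, mul_one, mul_smul_comm, h.fibreMatrix_mul_self, inv_smul_smul₀ hr, sub_self]
  have hquad : (distM G 1 - algebraMap ℝ _ θ) * (distM G 1 - algebraMap ℝ _ θ') =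
      (c 2 : ℝ) • (distM G 1 * fibreMatrix G 3) := by
    have hb : (b 0 : ℝ) = -(θ * θ') := by rw [hmul, neg_neg]
    simp only [Algebra.algebraMap_eq_smul_one, sub_mul, mul_sub, smul_mul_assoc, mul_smul_comm,
      one_mul, mul_one, hG.distM_one_mul_self h.1, ← hadd, hb]
    module
  rw [hquad, smul_mul_assoc, mul_assoc, hB, mul_zero, smul_zero]

lemma trace_sub_mul_one_sub_fibreMatrix [DecidableEq α] (hG : IsDRG G 3 b c)
    (h : IsAntipodalCover G 3 r) (θ : ℝ) :
    ((distM G 1 - algebraMap ℝ _ θ) * (1 - (r : ℝ)⁻¹ • fibreMatrix G 3)).trace =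
      -θ * (r - 1) * (b 0 + 1) := by
  have := hG.1.nonempty
  have hr := h.cast_ne_zero
  have hAB : (distM G 1 * fibreMatrix G 3).trace = 0 := by
    rw [← sub_add_cancel (_ * _) (distM G 1), ← hG.distM_two_eq h.1, trace_add,
      trace_distM two_ne_zero, trace_distM one_ne_zero, add_zero]
  simp only [Algebra.algebraMap_eq_smul_one, sub_mul, mul_sub, smul_mul_assoc, mul_smul_comm,
    one_mul, mul_one, trace_sub, trace_smul, hAB, trace_distM one_ne_zero, trace_one,
    trace_fibreMatrix, hG.card_eq h, smul_eq_mul, Nat.cast_mul, Nat.cast_add, Nat.cast_one]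
  field_simp
  ring

omit [Fintype α] in
lemma exists_natCast_mul_sub_eq [Finite α] (hG : IsDRG G 3 b c) (h : IsAntipodalCover G 3 r)
    {θ θ' : ℝ} (hne : θ ≠ θ') (hadd : θ + θ' = aInt b c 1 - c 2) (hmul : θ * θ' = -b 0) :
    ∃ m : ℕ, m * (θ' - θ) = -θ * (r - 1) * (b 0 + 1) := by
  classical
  have := Fintype.ofFinite α
  have := hG.1.nonempty
  have hproj : IsIdempotentElem ((r : ℝ)⁻¹ • fibreMatrix G 3) := by
    rw [IsIdempotentElem, smul_mul_smul_comm, h.fibreMatrix_mul_self, mul_smul,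
      inv_smul_smul₀ h.cast_ne_zero]
  have hcomm : Commute (distM G 1) (1 - (r : ℝ)⁻¹ • fibreMatrix G 3) :=
    (Commute.one_right _).sub_right ((hG.commute_distM_one_fibreMatrix h.1).smul_right _)
  have hrank := trace_eq_rank_of_isIdempotentElem <|
    isIdempotentElem_inv_sub_smul_mul hne hproj.one_sub hcomm
      (hG.sub_mul_sub_mul_one_sub_fibreMatrix h hadd hmul)
  rw [trace_smul, hG.trace_sub_mul_one_sub_fibreMatrix h, smul_eq_mul,
    inv_mul_eq_iff_eq_mul₀ (sub_ne_zero.2 hne.symm), mul_comm (θ' - θ)] at hrank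
  exact ⟨_, hrank.symm⟩

theorem exists_natCast_mul_add_sq_eq [DecidableEq α] (hG : IsDRG G 3 b c)
    (h : IsAntipodalCover G 3 r) {θ : ℝ} (hθ : θ ∈ spectrum ℝ (distM G 1)) (hk : θ ≠ b 0)
    (h₁ : θ ≠ -1) :
    ∃ m : ℕ, m * (b 0 + θ ^ 2) = θ ^ 2 * (r - 1) * (b 0 + 1) := by
  obtain ⟨θ', hadd⟩ : ∃ θ', θ + θ' = aInt b c 1 - c 2 := ⟨_, add_sub_cancel θ _⟩
  have hmul : θ * θ' = -b 0 := by
    linear_combination θ * hadd - hG.sq_eq_of_mem_spectrum h.1 hθ hk h₁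
  have hne : θ ≠ θ' := fun heq => by
    have hpos : (0 : ℝ) < b 0 := by exact_mod_cast hG.b_pos (by norm_num)
    rw [← heq] at hmul
    linarith [mul_self_nonneg θ]
  obtain ⟨m, hm⟩ := hG.exists_natCast_mul_sub_eq h hne hadd hmul
  exact ⟨m, by linear_combination m * hmul - θ * hm⟩

end IsDRG

lemma add_sq_dvd_of_mul_eq {R : Type*} [CommRing R] {m k r θ : R}
    (h : m * (k + θ ^ 2) = θ ^ 2 * (r - 1) * (k + 1)) :
    k + θ ^ 2 ∣ θ ^ 2 * (r - 1) * (θ ^ 2 - 1) :=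
  ⟨θ ^ 2 * (r - 1) - m, by linear_combination h⟩

theorem stmt17_general {α : Type*} [Fintype α] [DecidableEq α] {G : SimpleGraph α} {b c : ℕ → ℕ}
    {r : ℕ} (hG : IsDRG G 3 b c) (hcov : IsAntipodalCover G 3 r) {θ : ℤ}
    (hmem : (θ : ℝ) ∈ spectrum ℝ (distM G 1)) (hk : θ ≠ b 0) (hθ : 1 < θ ^ 2) :
    (Fintype.card α : ℤ) ≤ r * (θ ^ 2 - 1) * ((r - 1) * θ ^ 2 - 1) := by
  have hr : (2 : ℤ) ≤ r := by exact_mod_cast hG.two_le_of_isAntipodalCover (by norm_num) hcov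
  have h₁ : θ ≠ -1 := by rintro rfl; norm_num at hθ
  obtain ⟨m, hm⟩ := hG.exists_natCast_mul_add_sq_eq hcov hmem (by exact_mod_cast hk)
    (by exact_mod_cast h₁)
  have hdvd : (b 0 + θ ^ 2 : ℤ) ∣ θ ^ 2 * (r - 1) * (θ ^ 2 - 1) :=
    add_sq_dvd_of_mul_eq (m := (m : ℤ)) (by exact_mod_cast hm)
  have hle : b 0 + θ ^ 2 ≤ θ ^ 2 * (r - 1) * (θ ^ 2 - 1) :=
    Int.le_of_dvd (mul_pos (mul_pos (by linarith) (by linarith)) (by linarith)) hdvd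
  calc (Fintype.card α : ℤ) = r * (b 0 + 1) := by exact_mod_cast hG.card_eq hcov
    _ ≤ r * (θ ^ 2 * (r - 1) * (θ ^ 2 - 1) - θ ^ 2 + 1) := by gcongr; linarith
    _ = r * (θ ^ 2 - 1) * ((r - 1) * θ ^ 2 - 1) := by ring

/-- Proposition 3.13: for a fixed integer `r ≥ 2`, an antipodal
`r`-cover distance-regular graph of diameter 3 on `n` vertices whose smallest adjacency
eigenvalue is `−r − 1` satisfies `n ≤ r⁶ + 3r⁵ + r⁴ − 4r³ − 4r²` (hence there are only
finitely many such graphs). -/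
theorem stmt17 (G : SimpleGraph V) (b c : ℕ → ℕ) (r : ℕ) (hr : 2 ≤ r)
    (hG : IsDRG G 3 b c) (hcov : IsAntipodalCover G 3 r)
    (hmem : (-(r : ℝ) - 1) ∈ spectrum ℝ (distM G 1))
    (hmin : ∀ μ ∈ spectrum ℝ (distM G 1), -(r : ℝ) - 1 ≤ μ) :
    (Fintype.card V : ℝ) ≤
      (r : ℝ) ^ 6 + 3 * (r : ℝ) ^ 5 + (r : ℝ) ^ 4 - 4 * (r : ℝ) ^ 3 - 4 * (r : ℝ) ^ 2 := by
  have hbound : ((Fintype.card V : ℤ) : ℝ) ≤ _ := Int.cast_le.2 <|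
    stmt17_general hG hcov (θ := -(r : ℤ) - 1) (by exact_mod_cast hmem) (by omega) (by nlinarith)
  push_cast at hbound
  linarith
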